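/- Let X be a finite set of even cardinality |X| ≥ 4, let M be a uniformly random partition of X into pairs, and let F be any set of 2-element subsets of X. If Z = |F ∩ M|, then the variance of Z is at most |X|, provided |F| ≤ |X|(|X|−1)/4. -/

import Mathlib

open ProbabilityTheory

/-- `M` is a partition of the (finite) vertex type `V` into pairs. -/
def IsPerfectPairing {V : Type*} (M : Finset (Finset V)) : Prop :=
  (∀ p ∈ M, p.card = 2) ∧ ∀ v : V, ∃! p, p ∈ M ∧ v ∈ p

/-!
Write `n = |V|`, let `Q` be a set of pairs covering `s` points, and let `u`, `x` be two further
points. Every pairing `M ⊇ Q` gives `u` a unique partner among the `n - s - 1` remaining points,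
and transpositions of these points fixing `Q` show that all of them are equally likely, so
`Pr[Q ∪ {{u, x}} ⊆ M] = Pr[Q ⊆ M] / (n - s - 1)`.

For pairs `e` and `f` this makes `Pr[e, f ∈ M]` equal to `1 / ((n - 1)(n - 3))` times
`1 - |e ∩ f|`, corrected by `n - 2` on the diagonal `e = f`. The second moment of `|F ∩ M|`
therefore depends only on `|F|` and on `∑ |e ∩ f|`, which is the sum of the squared degrees of the
graph `F` and is at least `4|F|² / n` by Cauchy–Schwarz. With `t = |F| / (n - 1)` the mean, the
variance is then at most `(n - 2) / (n - 3) * (t - 2t² / n)`, a parabola in `t` with maximum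
at `t = n / 4`; this makes the bound uniform in `|F|`.
-/

open Finset MeasureTheory
open scoped Pointwise

section Indicators

variable {Ω ι : Type*} [MeasurableSpace Ω] {μ : Measure Ω}

lemma memLp_indicator_one [IsFiniteMeasure μ] {A : Set Ω} (hA : MeasurableSet A) :
    MemLp (A.indicator (1 : Ω → ℝ)) 2 μ :=
  memLp_indicator_const 2 hA 1 (Or.inr (measure_ne_top μ A))

variable [IsProbabilityMeasure μ]

lemma covariance_indicator_one {A B : Set Ω} (hA : MeasurableSet A) (hB : MeasurableSet B) :
    cov[A.indicator 1, B.indicator 1; μ] = μ.real (A ∩ B) - μ.real A * μ.real B := by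
  rw [covariance_eq_sub (memLp_indicator_one hA) (memLp_indicator_one hB),
    ← Set.inter_indicator_one, integral_indicator_one hA, integral_indicator_one hB,
    integral_indicator_one (hA.inter hB)]

lemma variance_sum_indicator_one {A : ι → Set Ω} {s : Finset ι}
    (hA : ∀ i ∈ s, MeasurableSet (A i)) :
    Var[∑ i ∈ s, (A i).indicator 1; μ] =
      ∑ i ∈ s, ∑ j ∈ s, μ.real (A i ∩ A j) - (∑ i ∈ s, μ.real (A i)) ^ 2 := by
  rw [variance_sum' fun i hi ↦ memLp_indicator_one (hA i hi), sq, sum_mul_sum,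
    ← sum_sub_distrib]
  refine sum_congr rfl fun i hi ↦ ?_
  rw [← sum_sub_distrib]
  exact sum_congr rfl fun j hj ↦ covariance_indicator_one (hA i hi) (hA j hj)

lemma variance_card_inter {α : Type*} [DecidableEq α] [MeasurableSpace (Finset α)]
    {ν : Measure (Finset α)} [IsProbabilityMeasure ν] {F : Finset α}
    (hF : ∀ a ∈ F, MeasurableSet {M : Finset α | a ∈ M}) :
    Var[fun M ↦ (#(F ∩ M) : ℝ); ν] =
      ∑ a ∈ F, ∑ b ∈ F, ν.real {M | a ∈ M ∧ b ∈ M} - (∑ a ∈ F, ν.real {M | a ∈ M}) ^ 2 := by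
  have card_inter_eq_sum : (fun M ↦ (#(F ∩ M) : ℝ)) =
      ∑ a ∈ F, {M : Finset α | a ∈ M}.indicator (1 : Finset α → ℝ) := by
    ext M
    simp [Set.indicator_apply]
  rw [card_inter_eq_sum, variance_sum_indicator_one hF]
  rfl

end Indicators

lemma smul_finset_eq_self {G α : Type*} [SMul G α] [DecidableEq α] {g : G} {s : Finset α}
    (h : ∀ a ∈ s, g • a = a) : g • s = s :=
  (image_congr h).trans image_id

lemma sum_sum_card_inter {α : Type*} [Fintype α] [DecidableEq α] (F : Finset (Finset α)) :
    ∑ e ∈ F, ∑ f ∈ F, #(e ∩ f) = ∑ v, #{e ∈ F | v ∈ e} ^ 2 := by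
  calc ∑ e ∈ F, ∑ f ∈ F, #(e ∩ f)
      = ∑ p ∈ F ×ˢ F, ∑ v, if v ∈ p.1 ∧ v ∈ p.2 then 1 else 0 := by
        rw [← sum_product' F F fun e f ↦ #(e ∩ f)]
        refine sum_congr rfl fun p _ ↦ ?_
        rw [← card_filter, filter_and, filter_univ_mem, filter_univ_mem]
    _ = ∑ v, #{p ∈ F ×ˢ F | v ∈ p.1 ∧ v ∈ p.2} := by
        rw [sum_comm]
        simp_rw [← card_filter]
    _ = ∑ v, #{e ∈ F | v ∈ e} ^ 2 := by
        refine sum_congr rfl fun v _ ↦ ?_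
        rw [filter_product (v ∈ ·) (v ∈ ·), card_product, sq]

lemma sq_sum_card_le_card_mul_sum_sum_card_inter {α : Type*} [Fintype α] [DecidableEq α]
    (F : Finset (Finset α)) :
    (∑ e ∈ F, #e) ^ 2 ≤ Fintype.card α * ∑ e ∈ F, ∑ f ∈ F, #(e ∩ f) := by
  have sum_card : ∑ e ∈ F, #e = ∑ v, #{e ∈ F | v ∈ e} := by
    simpa [bipartiteAbove, bipartiteBelow] using
      sum_card_bipartiteAbove_eq_sum_card_bipartiteBelow (fun e v ↦ v ∈ e) (s := F) (t := univ)
  rw [sum_card, sum_sum_card_inter]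
  exact sq_sum_le_card_mul_sum_sq

namespace IsPerfectPairing

variable {V : Type*} {M : Finset (Finset V)}

lemma eq_of_mem_of_mem (hM : IsPerfectPairing M) {p q : Finset V} {v : V} (hp : p ∈ M) (hq : q ∈ M)
    (hvp : v ∈ p) (hvq : v ∈ q) : p = q :=
  (hM.2 v).unique ⟨hp, hvp⟩ ⟨hq, hvq⟩

variable [DecidableEq V]

lemma ne_of_pair_mem (hM : IsPerfectPairing M) {u v : V} (h : {u, v} ∈ M) : u ≠ v := by
  rintro rfl
  simpa using hM.1 _ h

lemma existsUnique_pair_mem (hM : IsPerfectPairing M) (u : V) : ∃! v, {u, v} ∈ M := by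
  obtain ⟨p, ⟨hp, hup⟩, -⟩ := hM.2 u
  obtain ⟨v, hv⟩ : ∃ v, p.erase u = {v} :=
    card_eq_one.1 (by rw [card_erase_of_mem hup, hM.1 p hp])
  have p_eq : {u, v} = p := by rw [← hv, insert_erase hup]
  refine ⟨v, show {u, v} ∈ M from p_eq ▸ hp, fun w (hw : {u, w} ∈ M) ↦ ?_⟩
  have p_eq' : {u, w} = p := hM.eq_of_mem_of_mem hw hp (mem_insert_self u _) hup
  have w_mem : w ∈ p.erase u := mem_erase.2 ⟨(hM.ne_of_pair_mem hw).symm, p_eq' ▸ by simp⟩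
  rwa [hv, mem_singleton] at w_mem

lemma notMem_biUnion_of_pair_mem (hM : IsPerfectPairing M) {Q : Finset (Finset V)} (hQ : Q ⊆ M)
    {u v : V} (hu : u ∉ Q.biUnion id) (h : {u, v} ∈ M) : v ∉ Q.biUnion id := by
  intro hv
  obtain ⟨p, hp, hvp⟩ := mem_biUnion.1 hv
  have p_eq : {u, v} = p := hM.eq_of_mem_of_mem h (hQ hp) (by simp) hvp
  exact hu (mem_biUnion.2 ⟨p, hp, p_eq ▸ mem_insert_self u {v}⟩)

lemma smul (hM : IsPerfectPairing M) (σ : Equiv.Perm V) : IsPerfectPairing (σ • M) := by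
  refine ⟨fun p hp ↦ ?_, fun v ↦ ?_⟩
  · obtain ⟨q, hq, rfl⟩ := mem_smul_finset.1 hp
    rw [card_smul_finset, hM.1 q hq]
  · obtain ⟨p, ⟨hp, hvp⟩, hunique⟩ := hM.2 (σ⁻¹ • v)
    refine ⟨σ • p, ⟨smul_mem_smul_finset hp, inv_smul_mem_iff.1 hvp⟩, fun q ⟨hq, hvq⟩ ↦ ?_⟩
    rw [← hunique (σ⁻¹ • q) ⟨inv_smul_mem_iff.2 hq, smul_mem_smul_finset hvq⟩, smul_inv_smul]

end IsPerfectPairing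

lemma isPerfectPairing_smul_iff {V : Type*} [DecidableEq V] {M : Finset (Finset V)}
    (σ : Equiv.Perm V) : IsPerfectPairing (σ • M) ↔ IsPerfectPairing M :=
  ⟨fun hM ↦ by simpa using hM.smul σ⁻¹, fun hM ↦ hM.smul σ⟩

lemma exists_isPerfectPairing {V : Type*} [Fintype V] (heven : Even (Fintype.card V)) :
    ∃ M : Finset (Finset V), IsPerfectPairing M := by
  classical
  obtain ⟨k, hk⟩ := heven
  obtain ⟨φ⟩ : Nonempty (V ≃ Fin k × Bool) := Fintype.card_eq.1 (by simp [hk, mul_two])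
  refine ⟨univ.image fun i ↦ {φ.symm (i, false), φ.symm (i, true)}, ?_, fun v ↦ ?_⟩
  · simp
  · have mem_iff (i : Fin k) :
        v ∈ ({φ.symm (i, false), φ.symm (i, true)} : Finset V) ↔ (φ v).1 = i := by
      simp only [mem_insert, mem_singleton, Equiv.eq_symm_apply, Prod.ext_iff]
      cases (φ v).2 <;> simp
    refine ⟨_, ⟨mem_image_of_mem _ (mem_univ (φ v).1), (mem_iff _).2 rfl⟩, ?_⟩
    rintro _ ⟨hp, hvp⟩
    obtain ⟨i, -, rfl⟩ := mem_image.1 hp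
    rw [(mem_iff i).1 hvp]

section Counting

variable {V : Type*} [Fintype V] {Q M : Finset (Finset V)}

open Classical in
/-- The perfect pairings of `V` having all members of `Q` among their pairs. -/
noncomputable def pairingsContaining (Q : Finset (Finset V)) : Finset (Finset (Finset V)) :=
  {M | IsPerfectPairing M ∧ Q ⊆ M}

lemma mem_pairingsContaining : M ∈ pairingsContaining Q ↔ IsPerfectPairing M ∧ Q ⊆ M := by
  simp [pairingsContaining]

variable [DecidableEq V]

lemma pairingsContaining_insert (p : Finset V) (Q : Finset (Finset V)) :
    pairingsContaining (insert p Q) = {M ∈ pairingsContaining Q | p ∈ M} := by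
  ext M
  rw [mem_filter, mem_pairingsContaining, mem_pairingsContaining, insert_subset_iff]
  tauto

lemma pairingsContaining_smul (σ : Equiv.Perm V) (Q : Finset (Finset V)) :
    pairingsContaining (σ • Q) = σ • pairingsContaining Q := by
  ext M
  rw [← inv_smul_mem_iff, mem_pairingsContaining, mem_pairingsContaining,
    isPerfectPairing_smul_iff, smul_finset_subset_iff]

lemma card_pairingsContaining_insert_pair_congr {u x y : V} (hxu : x ≠ u) (hyu : y ≠ u)
    (hx : x ∉ Q.biUnion id) (hy : y ∉ Q.biUnion id) :
    #(pairingsContaining (insert {u, x} Q)) = #(pairingsContaining (insert {u, y} Q)) := by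
  have swap_smul_Q : Equiv.swap x y • Q = Q :=
    smul_finset_eq_self fun p hp ↦ smul_finset_eq_self fun a ha ↦ by
      have ha' : a ∈ Q.biUnion id := mem_biUnion.2 ⟨p, hp, ha⟩
      exact Equiv.swap_apply_of_ne_of_ne (ne_of_mem_of_not_mem ha' hx)
        (ne_of_mem_of_not_mem ha' hy)
  have swap_smul_pair : Equiv.swap x y • ({u, x} : Finset V) = {u, y} := by
    simp [smul_finset_insert, Equiv.swap_apply_of_ne_of_ne hxu.symm hyu.symm]
  rw [← card_smul_finset (Equiv.swap x y), ← pairingsContaining_smul, smul_finset_insert,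
    swap_smul_pair, swap_smul_Q]

lemma card_pairingsContaining_insert_pair_mul {u x : V} (hxu : x ≠ u)
    (hu : u ∉ Q.biUnion id) (hx : x ∉ Q.biUnion id) :
    #(pairingsContaining (insert {u, x} Q)) * (Fintype.card V - (#(Q.biUnion id) + 1)) =
      #(pairingsContaining Q) := by
  let isPartner (M : Finset (Finset V)) (y : V) : Prop := {u, y} ∈ M
  have unique_partner (M) (hM : M ∈ pairingsContaining Q) :
      #((insert u (Q.biUnion id))ᶜ.bipartiteAbove isPartner M) = 1 := by
    obtain ⟨hM, hQM⟩ := mem_pairingsContaining.1 hM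
    obtain ⟨y, hy, hunique⟩ := hM.existsUnique_pair_mem u
    refine card_eq_one.2 ⟨y, eq_singleton_iff_unique_mem.2
      ⟨(mem_bipartiteAbove _).2 ⟨?_, hy⟩, fun z hz ↦ hunique z ((mem_bipartiteAbove _).1 hz).2⟩⟩
    rw [mem_compl, mem_insert, not_or]
    exact ⟨(hM.ne_of_pair_mem hy).symm, hM.notMem_biUnion_of_pair_mem hQM hu hy⟩
  have same_count (y) (hy : y ∈ (insert u (Q.biUnion id))ᶜ) :
      #((pairingsContaining Q).bipartiteBelow isPartner y) =
        #(pairingsContaining (insert {u, x} Q)) := by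
    rw [mem_compl, mem_insert, not_or] at hy
    rw [card_pairingsContaining_insert_pair_congr hxu hy.1 hx hy.2, pairingsContaining_insert]
    rfl
  have double_count := card_mul_eq_card_mul isPartner unique_partner same_count
  rw [mul_one, card_compl, card_insert_of_notMem hu, mul_comm] at double_count
  exact double_count.symm

end Counting

section Probability

/-- The law of a uniformly random partition of `V` into pairs. -/
noncomputable abbrev uniformPairing (V : Type*) [MeasurableSpace (Finset (Finset V))] :
    Measure (Finset (Finset V)) :=
  uniformOn {M | IsPerfectPairing M}

variable {V : Type*} [MeasurableSpace (Finset (Finset V))]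
  [MeasurableSingletonClass (Finset (Finset V))]

lemma uniformPairing_real_mem_and_mem_of_not_disjoint [Finite V] {e f : Finset V}
    (hne : e ≠ f) (hef : ¬ Disjoint e f) : (uniformPairing V).real {M | e ∈ M ∧ f ∈ M} = 0 := by
  obtain ⟨v, hve, hvf⟩ := not_disjoint_iff.1 hef
  rw [measureReal_def, (uniformOn_eq_zero_iff (Set.toFinite _)).2, ENNReal.toReal_zero]
  ext M
  simp only [Set.mem_inter_iff, Set.mem_ofPred_eq, Set.mem_empty_iff_false, iff_false]
  rintro ⟨hM, he, hf⟩
  exact hne (hM.eq_of_mem_of_mem he hf hve hvf)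

variable [Fintype V]

lemma isProbabilityMeasure_uniformPairing (heven : Even (Fintype.card V)) :
    IsProbabilityMeasure (uniformPairing V) :=
  isProbabilityMeasure_uniformOn (Set.toFinite _) (exists_isPerfectPairing heven)

lemma uniformPairing_real_subset (Q : Finset (Finset V)) :
    (uniformPairing V).real {M | Q ⊆ M} =
      #(pairingsContaining Q) / #(pairingsContaining (∅ : Finset (Finset V))) := by
  classical
  have coe_pairings : {M : Finset (Finset V) | IsPerfectPairing M} =
      (pairingsContaining ∅ : Finset (Finset (Finset V))) := by
    ext M
    simp [mem_pairingsContaining]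
  have coe_supersets : {M | Q ⊆ M} = (({M | Q ⊆ M} : Finset (Finset (Finset V))) : Set _) := by
    simp
  have inter_eq : pairingsContaining ∅ ∩ ({M | Q ⊆ M} : Finset (Finset (Finset V))) =
      pairingsContaining Q := by
    ext M
    simp [mem_pairingsContaining]
  rw [uniformPairing, coe_pairings, coe_supersets, measureReal_def, uniformOn_apply_finset,
    inter_eq]
  simp

lemma uniformPairing_real_insert_pair_subset [DecidableEq V] {Q : Finset (Finset V)} {u x : V}
    (hxu : x ≠ u) (hu : u ∉ Q.biUnion id) (hx : x ∉ Q.biUnion id) :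
    (uniformPairing V).real {M | insert {u, x} Q ⊆ M} =
      (uniformPairing V).real {M | Q ⊆ M} / (Fintype.card V - #(Q.biUnion id) - 1) := by
  have card_add_two_le : #(Q.biUnion id) + 2 ≤ Fintype.card V := by
    have hdisj : Disjoint (Q.biUnion id) {u, x} := by
      rw [disjoint_insert_right, disjoint_singleton_right]
      exact ⟨hu, hx⟩
    rw [← card_pair hxu.symm, ← card_union_of_disjoint hdisj]
    exact card_le_univ _
  have two_le : (#(Q.biUnion id) : ℝ) + 2 ≤ Fintype.card V := mod_cast card_add_two_le
  rw [eq_div_iff (by linarith), uniformPairing_real_subset, uniformPairing_real_subset,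
    ← card_pairingsContaining_insert_pair_mul hxu hu hx, Nat.cast_mul,
    Nat.cast_sub (by lia)]
  push_cast
  ring

lemma uniformPairing_real_mem (heven : Even (Fintype.card V)) {e : Finset V} (he : #e = 2) :
    (uniformPairing V).real {M | e ∈ M} = 1 / (Fintype.card V - 1) := by
  have := isProbabilityMeasure_uniformPairing heven
  classical
  obtain ⟨u, x, hux, rfl⟩ := card_eq_two.1 he
  simpa using uniformPairing_real_insert_pair_subset (Q := ∅) hux.symm (by simp) (by simp)

lemma uniformPairing_real_mem_and_mem_of_disjoint (heven : Even (Fintype.card V))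
    {e f : Finset V} (he : #e = 2) (hf : #f = 2) (hef : Disjoint e f) :
    (uniformPairing V).real {M | e ∈ M ∧ f ∈ M} =
      1 / ((Fintype.card V - 1) * (Fintype.card V - 3)) := by
  classical
  obtain ⟨u, x, hux, rfl⟩ := card_eq_two.1 he
  rw [disjoint_insert_left, disjoint_singleton_left] at hef
  have := uniformPairing_real_insert_pair_subset (Q := {f}) hux.symm (by simp [hef.1])
    (by simp [hef.2])
  simp only [insert_subset_iff, singleton_subset_iff, singleton_biUnion, id_eq,
    uniformPairing_real_mem heven hf, hf] at this
  rw [this, div_div]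
  congr 2
  push_cast
  ring

variable [DecidableEq V]

lemma uniformPairing_real_mem_and_mem (hcard : 4 ≤ Fintype.card V)
    (heven : Even (Fintype.card V)) {e f : Finset V} (he : #e = 2) (hf : #f = 2) :
    (uniformPairing V).real {M | e ∈ M ∧ f ∈ M} =
      (1 - #(e ∩ f) + if e = f then (Fintype.card V : ℝ) - 2 else 0) /
        ((Fintype.card V - 1) * (Fintype.card V - 3)) := by
  have hn : (4 : ℝ) ≤ Fintype.card V := mod_cast hcard
  have hn1 : (Fintype.card V : ℝ) - 1 ≠ 0 := by linarith
  have hn3 : (Fintype.card V : ℝ) - 3 ≠ 0 := by linarith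
  by_cases hef : e = f
  · subst hef
    simp only [and_self, uniformPairing_real_mem heven he, inter_self, he, if_true]
    field_simp
    push_cast
    ring
  by_cases hdisj : Disjoint e f
  · rw [uniformPairing_real_mem_and_mem_of_disjoint heven he hf hdisj, if_neg hef,
      disjoint_iff_inter_eq_empty.1 hdisj]
    simp
  · have card_inter_lt : #(e ∩ f) < 2 := by
      rw [← he]
      refine card_lt_card (inter_subset_left.ssubset_of_ne fun h ↦ hef ?_)
      exact eq_of_subset_of_card_le (inter_eq_left.1 h) (by rw [he, hf])
    have card_inter : #(e ∩ f) = 1 := by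
      have := card_pos.2 (not_disjoint_iff_nonempty_inter.1 hdisj)
      lia
    rw [uniformPairing_real_mem_and_mem_of_not_disjoint hef hdisj, if_neg hef, card_inter]
    simp

lemma variance_card_inter_uniformPairing (hcard : 4 ≤ Fintype.card V)
    (heven : Even (Fintype.card V)) {F : Finset (Finset V)} (hF : ∀ e ∈ F, #e = 2) :
    Var[fun M ↦ (#(F ∩ M) : ℝ); uniformPairing V] =
      ((Fintype.card V - 2) * #F + #F ^ 2 - ∑ e ∈ F, ∑ f ∈ F, (#(e ∩ f) : ℝ)) /
        ((Fintype.card V - 1) * (Fintype.card V - 3)) - (#F / (Fintype.card V - 1)) ^ 2 := by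
  have := isProbabilityMeasure_uniformPairing heven
  have sum_single : ∑ e ∈ F, (uniformPairing V).real {M | e ∈ M} = #F / (Fintype.card V - 1) := by
    rw [sum_congr rfl fun e he ↦ uniformPairing_real_mem heven (hF e he), sum_const,
      nsmul_eq_mul, mul_one_div]
  have sum_double : ∑ e ∈ F, ∑ f ∈ F, (uniformPairing V).real {M | e ∈ M ∧ f ∈ M} =
      ((Fintype.card V - 2) * #F + #F ^ 2 - ∑ e ∈ F, ∑ f ∈ F, (#(e ∩ f) : ℝ)) /
        ((Fintype.card V - 1) * (Fintype.card V - 3)) := by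
    rw [sum_congr rfl fun e he ↦ sum_congr rfl fun f hf ↦
      uniformPairing_real_mem_and_mem hcard heven (hF e he) (hF f hf)]
    simp_rw [← sum_div, sum_add_distrib, sum_sub_distrib, sum_ite_eq]
    rw [sum_ite_mem, inter_self]
    simp only [sum_const, nsmul_eq_mul, mul_one]
    ring
  rw [variance_card_inter fun e _ ↦ (Set.toFinite _).measurableSet, sum_single, sum_double]

lemma variance_card_inter_uniformPairing_le (hcard : 4 ≤ Fintype.card V)
    (heven : Even (Fintype.card V)) {F : Finset (Finset V)} (hF : ∀ e ∈ F, #e = 2) :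
    Var[fun M ↦ (#(F ∩ M) : ℝ); uniformPairing V] ≤
      ((Fintype.card V : ℝ) - 2) / (Fintype.card V - 3) * (Fintype.card V / 8) := by
  have cauchySchwarz : (2 * #F : ℝ) ^ 2 ≤ Fintype.card V * ∑ e ∈ F, ∑ f ∈ F, (#(e ∩ f) : ℝ) := by
    have := sq_sum_card_le_card_mul_sum_sum_card_inter F
    rw [sum_congr rfl hF, sum_const, smul_eq_mul, mul_comm #F] at this
    exact_mod_cast this
  have hn : (4 : ℝ) ≤ Fintype.card V := mod_cast hcard
  rw [variance_card_inter_uniformPairing hcard heven hF]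
  set n : ℝ := (Fintype.card V : ℝ)
  set m : ℝ := (#F : ℝ)
  set D := ∑ e ∈ F, ∑ f ∈ F, (#(e ∩ f) : ℝ)
  have hD : (2 * m) ^ 2 / n ≤ D := by rwa [div_le_iff₀' (by linarith)]
  have hn1 : 0 < n - 1 := by linarith
  have hn3 : 0 < n - 3 := by linarith
  calc ((n - 2) * m + m ^ 2 - D) / ((n - 1) * (n - 3)) - (m / (n - 1)) ^ 2
      ≤ ((n - 2) * m + m ^ 2 - (2 * m) ^ 2 / n) / ((n - 1) * (n - 3)) - (m / (n - 1)) ^ 2 := by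
        gcongr
    _ = (n - 2) / (n - 3) * (n / 8 - 2 / n * (m / (n - 1) - n / 4) ^ 2) := by
        field_simp
        ring
    _ ≤ (n - 2) / (n - 3) * (n / 8) := by
        gcongr
        · exact div_nonneg (by linarith) hn3.le
        · exact sub_le_self _ (by positivity)

end Probability

theorem stmt_10_general {V : Type*} [Fintype V] [DecidableEq V]
    [MeasurableSpace (Finset (Finset V))] [MeasurableSingletonClass (Finset (Finset V))]
    (hcard : 4 ≤ Fintype.card V) (heven : Even (Fintype.card V))
    (F : Finset (Finset V)) (hF2 : ∀ e ∈ F, #e = 2) :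
    Var[fun M ↦ (#(F ∩ M) : ℝ); uniformOn {M | IsPerfectPairing M}] ≤ Fintype.card V / 4 := by
  have hn : (4 : ℝ) ≤ Fintype.card V := mod_cast hcard
  calc Var[fun M ↦ (#(F ∩ M) : ℝ); uniformOn {M | IsPerfectPairing M}]
      ≤ ((Fintype.card V : ℝ) - 2) / (Fintype.card V - 3) * (Fintype.card V / 8) :=
        variance_card_inter_uniformPairing_le hcard heven hF2
    _ ≤ 2 * (Fintype.card V / 8) := by
        gcongr
        rw [div_le_iff₀ (by linarith)]
        linarith
    _ = Fintype.card V / 4 := by ring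

/-- Let `X` be a finite set of even cardinality `|X| ≥ 4`, let `M` be a uniformly
random partition of `X` into pairs, and let `F` be a family of two-element subsets of
`X` with `|F| ≤ |X|(|X|-1)/4`.  Then the variance of `Z = |F ∩ M|` is at most `|X|`. -/
theorem stmt_10 {V : Type*} [Fintype V] [DecidableEq V]
    [MeasurableSpace (Finset (Finset V))] [MeasurableSingletonClass (Finset (Finset V))]
    (hcard : 4 ≤ Fintype.card V) (heven : Even (Fintype.card V))
    (F : Finset (Finset V)) (hF2 : ∀ e ∈ F, e.card = 2)
    (hFsize : 4 * F.card ≤ Fintype.card V * (Fintype.card V - 1)) :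
    variance (fun M : Finset (Finset V) => ((F ∩ M).card : ℝ))
        (uniformOn {M | IsPerfectPairing M}) ≤ Fintype.card V := by
  exact (stmt_10_general hcard heven F hF2).trans (div_le_self (Nat.cast_nonneg _) (by norm_num))
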